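/- arXiv:1808.01215 — 2 statements merged into one kernel-verified Lean document; each statement's English description precedes it below -/
import Mathlib

section
/- Every comparability graph on m ≥ 4 vertices can be represented by a concatenation of at most ⌊m/2⌋ permutations of its vertex set; in particular, its representation number is at most ⌊m/2⌋. -/
/-!
A transitive orientation of `G` is a strict partial order `P` on `V`. If `L₁, …, L_k` are linear
extensions of `P` whose intersection is `P`, then in the word `L₁ L₂ ⋯ L_k` two comparable letters
occur in the same order in every block, hence alternate, while two incomparable letters occur in
both orders, hence do not. So the theorem reduces to Hiraguchi's theorem (`hiraguchi`):
a poset with `m ≥ 4` elements has dimension at most `k = ⌊m/2⌋`.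

Linear extensions are encoded by monotone maps `V → ℕ`, ties being allowed (`RealizedOn`): a tie is
broken at the very end by one fixed linear extension, which keeps the map monotone.

By Dilworth's theorem (`dilworth`, Galvin's proof) the poset is either covered by `k` chains or
contains an antichain with more than `k` elements.
* If it is covered by `k` chains, each chain `C` yields the map `v ↦ #{u ∈ C | u ≤ v}`, which puts
  every element of `C` above all elements incomparable to it; these `k` maps realize the order
  (`realizedOn_of_chain_coloring`).
* Otherwise there is an antichain `A` with exactly `m - k` elements, and `k ≥ 2` points lie outside
  it. An antichain together with two points has dimension at most two
  (`realizedOn_antichain_insert_two`), and adding a point raises the dimension by at most one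
  (`RealizedOn.insert_point`).
-/

/-- Letters `x` and `y` alternate in the word `w` if the subsequence of `w` consisting of
all occurrences of `x` and `y` has no two equal consecutive letters (i.e. is of the form
`xyxy⋯` or `yxyx⋯`). -/
def Alternate {V : Type*} [DecidableEq V] (w : List V) (x y : V) : Prop :=
  (w.filter (fun z => decide (z = x ∨ z = y))).Chain' (· ≠ ·)

/-- A word `w` over `V` represents the simple graph `G` if it contains every letter of `V`
and distinct letters alternate in `w` iff they are adjacent in `G`. -/
def Represents {V : Type*} [DecidableEq V] (w : List V) (G : SimpleGraph V) : Prop :=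
  (∀ v : V, v ∈ w) ∧ ∀ x y : V, x ≠ y → (Alternate w x y ↔ G.Adj x y)

/-- A graph is word-representable if some word represents it. -/
def WordRepresentable {V : Type*} [DecidableEq V] (G : SimpleGraph V) : Prop :=
  ∃ w : List V, Represents w G

/-- A graph is `k`-representable if some `k`-uniform word (every letter occurring
exactly `k` times) represents it. -/
def KRepresentable {V : Type*} [DecidableEq V] (G : SimpleGraph V) (k : ℕ) : Prop :=
  ∃ w : List V, (∀ v : V, w.count v = k) ∧ Represents w G

/-- An orientation of a simple graph `G`: each edge gets exactly one of its two directions. -/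
structure GraphOrientation {V : Type*} (G : SimpleGraph V) where
  dir : V → V → Prop
  adj_iff : ∀ x y, G.Adj x y ↔ (dir x y ∨ dir y x)
  not_both : ∀ x y, ¬(dir x y ∧ dir y x)

/-- An orientation is acyclic if it has no directed cycle. -/
def GraphOrientation.Acyclic {V : Type*} {G : SimpleGraph V} (o : GraphOrientation G) : Prop :=
  ∀ v : V, ¬ Relation.TransGen o.dir v v

/-- An orientation has no shortcut of length `k` if for every directed path
`v 0 → v 1 → ⋯ → v k` (with `k` edges) such that the edge `v 0 → v k` is present,
all edges `v i → v j` for `i < j` are present. -/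
def GraphOrientation.NoShortcutOfLength {V : Type*} {G : SimpleGraph V}
    (o : GraphOrientation G) (k : ℕ) : Prop :=
  ∀ v : Fin (k + 1) → V,
    (∀ i : Fin k, o.dir (v i.castSucc) (v i.succ)) →
    o.dir (v 0) (v (Fin.last k)) →
    ∀ i j : Fin (k + 1), i < j → o.dir (v i) (v j)

/-- An orientation is semi-transitive if it has no shortcut of any length:
for every directed path `v_1 → ⋯ → v_k`, either the edge `v_1 → v_k` is absent, or it is
present and all edges `v_i → v_j` for `i < j` are present. -/
def GraphOrientation.SemiTransitive {V : Type*} {G : SimpleGraph V}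
    (o : GraphOrientation G) : Prop :=
  ∀ k : ℕ, o.NoShortcutOfLength k

/-- A graph is a comparability graph if it admits a transitive orientation. -/
def IsComparability {V : Type*} (G : SimpleGraph V) : Prop :=
  ∃ o : GraphOrientation G, ∀ x y z, o.dir x y → o.dir y z → o.dir x z

/-! ### Realizers by monotone maps -/

/-- The lexicographic product of two natural-number keys on a finite type is again given by a
natural-number key. -/
theorem exists_lex {V : Type*} [Fintype V] (c f : V → ℕ) :
    ∃ g : V → ℕ, ∀ x y, g x < g y ↔ c x < c y ∨ c x = c y ∧ f x < f y := by
  obtain ⟨N, hN⟩ : ∃ N, ∀ v, f v < N :=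
    ⟨Finset.univ.sup f + 1, fun v => Nat.lt_succ_of_le (Finset.le_sup (Finset.mem_univ v))⟩
  refine ⟨fun v => N * c v + f v, fun x y => ?_⟩
  have hx := hN x
  have hy := hN y
  rcases lt_trichotomy (c x) (c y) with h | h | h
  · have : N * (c x + 1) ≤ N * c y := Nat.mul_le_mul_left _ h
    simp only [h, true_or, iff_true]
    rw [mul_add] at this
    omega
  · simp [h]
  · have : N * (c y + 1) ≤ N * c x := Nat.mul_le_mul_left _ h
    rw [mul_add] at this
    dsimp only
    constructor <;> intro <;> omega

/-- The order induced on `S` has dimension at most `k`: there are `k` monotone maps `F i : V → ℕ`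
such that any two incomparable elements of `S` are put in each of the two orders by some `F i`.
The maps are monotone on all of `V`, so that passing to a larger `S` needs no extension, and they
need not be injective: breaking ties by a fixed linear extension gives linear extensions. -/
def RealizedOn {V : Type*} [PartialOrder V] (S : Finset V) (k : ℕ) : Prop :=
  ∃ F : Fin k → V → ℕ, (∀ i, Monotone (F i)) ∧
    ∀ x ∈ S, ∀ y ∈ S, ¬ x ≤ y → ¬ y ≤ x → ∃ i, F i x < F i y

/-- Adding a point `p` raises the dimension by at most one. The first map `F 0` is replaced by two:
one puts the elements below `p` first, then `p`, then all others; the other puts the elements above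
`p` last, preceded by `p`, preceded by all others; within each group `F 0` decides. A strict
inequality `F 0 x < F 0 y` can only be lost in both if `y < p < x`. -/
theorem RealizedOn.insert_point {V : Type*} [PartialOrder V] [Fintype V] [DecidableEq V]
    {S : Finset V} {k : ℕ} (h : RealizedOn S (k + 1)) (p : V) :
    RealizedOn (insert p S) (k + 2) := by
  classical
  obtain ⟨F, hF, hS⟩ := h
  obtain ⟨g, hg⟩ := exists_lex (fun v => if v < p then 0 else if v = p then 1 else 2) (F 0)
  obtain ⟨g', hg'⟩ := exists_lex (fun v => if p < v then 2 else if v = p then 1 else 0) (F 0)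
  refine ⟨Fin.cons g (Fin.cons g' (fun i : Fin k => F i.succ)), ?_, ?_⟩
  · intro i
    refine Fin.cases ?_ (fun i => Fin.cases ?_ (fun i => ?_) i) i
    · intro x y hxy
      have := hF 0 hxy
      have h1 : y < p → x < p := fun h => hxy.trans_lt h
      have h2 : y = p → x = p ∨ x < p := fun h => (h ▸ hxy).eq_or_lt
      rw [← not_lt, Fin.cons_zero, hg]
      grind
    · intro x y hxy
      have := hF 0 hxy
      have h1 : p < x → p < y := fun h => h.trans_le hxy
      have h2 : x = p → y = p ∨ p < y := fun h => (h ▸ hxy).eq_or_lt'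
      rw [← not_lt, Fin.cons_succ, Fin.cons_zero, hg']
      grind
    · simpa using hF i.succ
  · intro x hx y hy hxy hyx
    have h0 : (g x < g y ∨ g' x < g' y) ∨ ∃ i : Fin k, F i.succ x < F i.succ y := by
      rw [hg, hg']
      by_cases hpx : x = p
      · left; left; left; grind
      by_cases hpy : y = p
      · left; right; left; grind
      obtain ⟨i, hi⟩ := hS x (by grind) y (by grind) hxy hyx
      refine Fin.cases (fun hi => ?_) (fun i hi => Or.inr ⟨i, hi⟩) i hi
      left
      by_cases h1 : y < p <;> by_cases h2 : p < x
      · exact absurd (h1.trans h2).le hyx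
      all_goals grind
    rcases h0 with (h | h) | ⟨i, h⟩
    · exact ⟨0, by simpa using h⟩
    · exact ⟨1, by simpa using h⟩
    · exact ⟨i.succ.succ, by simpa using h⟩

theorem exists_monotone_extension {V : Type*} [PartialOrder V] (S : Finset V) (f : V → ℕ)
    (hf : MonotoneOn f S) : ∃ g : V → ℕ, Monotone g ∧ ∀ v ∈ S, g v = f v := by
  classical
  refine ⟨fun v => (S.filter (· ≤ v)).sup f, fun x y hxy => ?_, fun v hv => le_antisymm ?_ ?_⟩
  · refine Finset.sup_mono fun s hs => ?_
    simp only [Finset.mem_filter] at hs ⊢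
    exact ⟨hs.1, hs.2.trans hxy⟩
  · refine Finset.sup_le fun s hs => ?_
    simp only [Finset.mem_filter] at hs
    exact hf hs.1 hv hs.2
  · exact Finset.le_sup (f := f) (by simp [hv])

/-- Two stage functions suffice for dimension two: incomparable elements in the same stage of both
`s` and `t` are separated by an arbitrary enumeration of `V`, used increasingly in the first map and
decreasingly in the second. -/
theorem realizedOn_two_of_stages {V : Type*} [PartialOrder V] [Fintype V] (S : Finset V)
    (s t : V → ℕ)
    (hst : ∀ x ∈ S, ∀ y ∈ S, x < y → s x < s y ∧ t x < t y)
    (hinc : ∀ x ∈ S, ∀ y ∈ S, ¬ x ≤ y → ¬ y ≤ x →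
      s x < s y ∨ t x < t y ∨ (s x = s y ∧ t x = t y)) :
    RealizedOn S 2 := by
  classical
  let e := Fintype.equivFin V
  obtain ⟨f, hf⟩ := exists_lex s (fun v => (e v : ℕ))
  obtain ⟨g, hg⟩ := exists_lex t (fun v => Fintype.card V - (e v : ℕ))
  have hfm : MonotoneOn f S := by
    intro x hx y hy hxy
    rcases hxy.eq_or_lt with rfl | hlt
    · rfl
    · exact ((hf x y).2 (Or.inl (hst x hx y hy hlt).1)).le
  have hgm : MonotoneOn g S := by
    intro x hx y hy hxy
    rcases hxy.eq_or_lt with rfl | hlt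
    · rfl
    · exact ((hg x y).2 (Or.inl (hst x hx y hy hlt).2)).le
  obtain ⟨f', hf', hff⟩ := exists_monotone_extension S f hfm
  obtain ⟨g', hg', hgg⟩ := exists_monotone_extension S g hgm
  refine ⟨![f', g'], ?_, ?_⟩
  · intro i; fin_cases i
    · exact hf'
    · exact hg'
  · intro x hx y hy hxy hyx
    have hne : (e x : ℕ) ≠ e y := fun h => hxy (e.injective (Fin.ext h)).le
    have hex := (e x).isLt
    have hey := (e y).isLt
    have : f x < f y ∨ g x < g y := by
      rw [hf, hg]
      have := hinc x hx y hy hxy hyx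
      omega
    rcases this with h | h
    · exact ⟨0, by simpa [hff x hx, hff y hy] using h⟩
    · exact ⟨1, by simpa [hgg x hx, hgg y hy] using h⟩

/-! ### Dilworth's theorem -/

/-- Dilworth's theorem for a finite subset of a poset: some `k` is at once the number of chains in
a chain cover (the colour classes of `c`) and the size of an antichain. -/
theorem dilworth {V : Type*} [PartialOrder V] [DecidableEq V] (S : Finset V) :
    ∃ k : ℕ, (∃ c : V → ℕ, (∀ v ∈ S, c v < k) ∧
        ∀ u ∈ S, ∀ v ∈ S, c u = c v → u ≤ v ∨ v ≤ u) ∧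
      ∃ A ⊆ S, A.card = k ∧ ∀ u ∈ A, ∀ v ∈ A, u ≤ v → u = v := by
  classical
  induction S using Finset.strongInduction with
  | H S ih =>
  rcases S.eq_empty_or_nonempty with rfl | hne
  · exact ⟨0, ⟨fun _ => 0, by simp, by simp⟩, ∅, by simp⟩
  obtain ⟨a, haS, hamax⟩ := S.exists_maximal hne
  obtain ⟨k, ⟨c, hck, hc⟩, A₀, hA₀S, hA₀k, hA₀⟩ := ih _ (Finset.erase_ssubset haS)
  set S' := S.erase a with hS'
  have hinj : ∀ A ⊆ S', (∀ u ∈ A, ∀ v ∈ A, u ≤ v → u = v) → Set.InjOn c A := by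
    intro A hAS hA u hu v hv huv
    rcases hc u (hAS hu) v (hAS hv) huv with h | h
    · exact hA u hu v hv h
    · exact (hA v hv u hu h).symm
  have himg : ∀ A ⊆ S', A.image c ⊆ Finset.range k := by
    intro A hAS i hi
    obtain ⟨v, hv, rfl⟩ := Finset.mem_image.1 hi
    exact Finset.mem_range.2 (hck v (hAS hv))
  have hsurj : ∀ A ⊆ S', (∀ u ∈ A, ∀ v ∈ A, u ≤ v → u = v) → A.card = k →
      ∀ i < k, ∃ v ∈ A, c v = i := by
    intro A hAS hA hAk i hi
    have : A.image c = Finset.range k :=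
      Finset.eq_of_subset_of_card_le (himg A hAS)
        (by rw [Finset.card_image_of_injOn (hinj A hAS hA), hAk, Finset.card_range])
    exact Finset.mem_image.1 (this ▸ Finset.mem_range.2 hi : i ∈ A.image c)
  -- `T i` consists of the elements of the `i`-th chain that lie in an antichain of size `k`;
  -- `x i` is its largest element, and the `x i` form an antichain.
  let T : ℕ → Finset V := fun i => S'.filter fun v => c v = i ∧
    ∃ A ⊆ S', (∀ u ∈ A, ∀ v ∈ A, u ≤ v → u = v) ∧ A.card = k ∧ v ∈ A
  have hT : ∀ i v, v ∈ T i ↔ v ∈ S' ∧ c v = i ∧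
      ∃ A ⊆ S', (∀ u ∈ A, ∀ v ∈ A, u ≤ v → u = v) ∧ A.card = k ∧ v ∈ A := by
    intro i v; simp only [T, Finset.mem_filter]
  have hx : ∀ i : ℕ, ∃ x : V, i < k → x ∈ T i ∧ ∀ z ∈ T i, z ≤ x := by
    intro i
    by_cases hi : i < k
    · obtain ⟨v, hv, hvi⟩ := hsurj A₀ hA₀S hA₀ hA₀k i hi
      obtain ⟨x, hxT, hxmax⟩ := (T i).exists_maximal
        ⟨v, (hT i v).2 ⟨hA₀S hv, hvi, A₀, hA₀S, hA₀, hA₀k, hv⟩⟩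
      refine ⟨x, fun _ => ⟨hxT, fun z hz => ?_⟩⟩
      rcases hc z ((hT i z).1 hz).1 x ((hT i x).1 hxT).1
        (((hT i z).1 hz).2.1.trans ((hT i x).1 hxT).2.1.symm) with h | h
      · exact h
      · exact hxmax hz h
    · exact ⟨a, fun h => absurd h hi⟩
  choose x hx using hx
  have hxS : ∀ i < k, x i ∈ S' := fun i hi => ((hT i _).1 (hx i hi).1).1
  have hxc : ∀ i < k, c (x i) = i := fun i hi => ((hT i _).1 (hx i hi).1).2.1
  have hxanti : ∀ i < k, ∀ j < k, x i ≤ x j → i = j := by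
    intro i hi j hj hij
    obtain ⟨-, hcj, B, hBS, hB, hBk, hjB⟩ := (hT j _).1 (hx j hj).1
    obtain ⟨z, hzB, hzi⟩ := hsurj B hBS hB hBk i hi
    have hzx : z ≤ x i := (hx i hi).2 z ((hT i z).2 ⟨hBS hzB, hzi, B, hBS, hB, hBk, hzB⟩)
    have := hB z hzB _ hjB (hzx.trans hij)
    rw [← hzi, this, hcj]
  by_cases hcase : ∃ i < k, x i ≤ a
  · obtain ⟨i, hi, hia⟩ := hcase
    -- The part of the `i`-th chain up to `x i`, extended by `a`, is a chain `K` that meets every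
    -- antichain of size `k` in `S'`; so `k - 1` chains suffice for the rest.
    set K : Finset V := insert a (S'.filter fun z => c z = i ∧ z ≤ x i) with hK
    have hKmem : ∀ z, z ∈ K ↔ z = a ∨ z ∈ S' ∧ c z = i ∧ z ≤ x i := by
      intro z; simp [hK]
    obtain ⟨l, ⟨d, hdl, hd⟩, B, hBS, hBl, hB⟩ := ih (S \ K)
      (Finset.sdiff_ssubset (by intro z; rw [hKmem]; grind) ⟨a, by simp [hK]⟩)
    have hBS' : B ⊆ S' := by
      intro z hz
      have := hBS hz
      simp only [Finset.mem_sdiff, hKmem] at this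
      simp only [hS', Finset.mem_erase]
      tauto
    have hlk : l < k := by
      have hle : l ≤ k := by
        have := Finset.card_le_card (himg B hBS')
        rwa [Finset.card_image_of_injOn (hinj B hBS' hB), hBl, Finset.card_range] at this
      refine hle.lt_of_ne fun hlk => ?_
      obtain ⟨z, hzB, hzi⟩ := hsurj B hBS' hB (hBl.trans hlk) i hi
      have hzx : z ≤ x i :=
        (hx i hi).2 z ((hT i z).2 ⟨hBS' hzB, hzi, B, hBS', hB, hBl.trans hlk, hzB⟩)
      exact (Finset.mem_sdiff.1 (hBS hzB)).2 ((hKmem z).2 (Or.inr ⟨hBS' hzB, hzi, hzx⟩))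
    have hKchain : ∀ u ∈ K, ∀ v ∈ K, u ≤ v ∨ v ≤ u := by
      intro u hu v hv
      rcases (hKmem u).1 hu with rfl | ⟨hu1, hu2, hu3⟩ <;>
        rcases (hKmem v).1 hv with rfl | ⟨hv1, hv2, hv3⟩
      · exact Or.inl le_rfl
      · exact Or.inr (hv3.trans hia)
      · exact Or.inl (hu3.trans hia)
      · exact hc u hu1 v hv1 (hu2.trans hv2.symm)
    refine ⟨k, ⟨fun v => if v ∈ K then l else d v, ?_, ?_⟩, A₀,
      hA₀S.trans (Finset.erase_subset _ _), hA₀k, hA₀⟩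
    · intro v hv
      by_cases hvK : v ∈ K
      · simpa [hvK] using hlk
      · simpa [hvK] using (hdl v (Finset.mem_sdiff.2 ⟨hv, hvK⟩)).trans hlk
    · intro u hu v hv huv
      by_cases huK : u ∈ K <;> by_cases hvK : v ∈ K
      · exact hKchain u huK v hvK
      · have := hdl v (Finset.mem_sdiff.2 ⟨hv, hvK⟩)
        simp only [huK, hvK, if_true, if_false] at huv
        omega
      · have := hdl u (Finset.mem_sdiff.2 ⟨hu, huK⟩)
        simp only [huK, hvK, if_true, if_false] at huv
        omega
      · simp only [huK, hvK, if_false] at huv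
        exact hd u (Finset.mem_sdiff.2 ⟨hu, huK⟩) v (Finset.mem_sdiff.2 ⟨hv, hvK⟩) huv
  · push Not at hcase
    -- Here `a` together with the `x i` is an antichain of size `k + 1`, and `{a}` is a new chain.
    have haS' : ∀ i < k, x i ≠ a := fun i hi h => by
      have := hxS i hi
      simp [hS', h] at this
    refine ⟨k + 1, ⟨fun v => if v = a then k else c v, ?_, ?_⟩,
      insert a ((Finset.range k).image x), ?_, ?_, ?_⟩
    · intro v hv
      by_cases hva : v = a
      · simp [hva]
      · simpa [hva] using (hck v (by simp [hS', hva, hv])).trans (Nat.lt_succ_self k)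
    · intro u hu v hv huv
      by_cases hua : u = a <;> by_cases hva : v = a
      · left; rw [hua, hva]
      · have := hck v (by simp [hS', hva, hv])
        simp only [hua, hva, if_true, if_false] at huv
        omega
      · have := hck u (by simp [hS', hua, hu])
        simp only [hua, hva, if_true, if_false] at huv
        omega
      · simp only [hua, hva, if_false] at huv
        exact hc u (by simp [hS', hua, hu]) v (by simp [hS', hva, hv]) huv
    · intro z hz
      simp only [Finset.mem_insert, Finset.mem_image, Finset.mem_range] at hz
      rcases hz with rfl | ⟨i, hi, rfl⟩
      · exact haS
      · exact Finset.mem_of_mem_erase (hxS i hi)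
    · rw [Finset.card_insert_of_notMem, Finset.card_image_of_injOn, Finset.card_range]
      · intro i hi j hj hij
        exact hxanti i (by simpa using hi) j (by simpa using hj) hij.le
      · simp only [Finset.mem_image, Finset.mem_range, not_exists, not_and]
        exact haS'
    · intro u hu v hv huv
      simp only [Finset.mem_insert, Finset.mem_image, Finset.mem_range] at hu hv
      rcases hu with rfl | ⟨i, hi, rfl⟩ <;> rcases hv with rfl | ⟨j, hj, rfl⟩
      · rfl
      · exact le_antisymm huv (hamax (Finset.mem_of_mem_erase (hxS j hj)) huv)
      · exact absurd huv (hcase i hi)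
      · rw [hxanti i hi j hj huv]

/-- A poset covered by `k` chains has dimension at most `k`. -/
theorem realizedOn_of_chain_coloring {V : Type*} [PartialOrder V] [Fintype V] {k : ℕ} (c : V → ℕ)
    (hck : ∀ v, c v < k) (hc : ∀ u v, c u = c v → u ≤ v ∨ v ≤ u) :
    RealizedOn (Finset.univ : Finset V) k := by
  classical
  refine ⟨fun i v => (Finset.univ.filter fun u => c u = i ∧ u ≤ v).card, ?_, ?_⟩
  · intro i x y hxy
    refine Finset.card_le_card fun u hu => ?_
    simp only [Finset.mem_filter] at hu ⊢
    exact ⟨hu.1, hu.2.1, hu.2.2.trans hxy⟩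
  · intro x _ y _ hxy hyx
    refine ⟨⟨c y, hck y⟩, Finset.card_lt_card ?_⟩
    rw [Finset.ssubset_iff_of_subset]
    · exact ⟨y, by simp, by simp [hyx]⟩
    · intro u hu
      simp only [Finset.mem_filter, Finset.mem_univ, true_and] at hu ⊢
      refine ⟨hu.1, (hc u y hu.1).resolve_right fun h => hyx (h.trans hu.2)⟩

/-! ### An antichain and further points -/

/-- `realizedOn_two_of_stages` for an antichain and two points, with the conditions split according
to the pairs involved. -/
theorem realizedOn_antichain_insert_two_aux {V : Type*} [PartialOrder V] [Fintype V]
    [DecidableEq V] {A : Finset V}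
    {x y : V} (hxA : x ∉ A) (hyA : y ∉ A) (hxy : x ≠ y) (s t : V → ℕ)
    (hxylt : x < y → s x < s y ∧ t x < t y) (hyxlt : y < x → s y < s x ∧ t y < t x)
    (hinc : ¬ x < y → ¬ y < x → (s x < s y ∨ t x < t y) ∧ (s y < s x ∨ t y < t x))
    (hx : ∀ a ∈ A, (a < x → s a < s x ∧ t a < t x) ∧ (x < a → s x < s a ∧ t x < t a) ∧
      (¬ a < x → ¬ x < a → (s x < s a ∨ t x < t a) ∧ (s a < s x ∨ t a < t x)))
    (hy : ∀ a ∈ A, (a < y → s a < s y ∧ t a < t y) ∧ (y < a → s y < s a ∧ t y < t a) ∧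
      (¬ a < y → ¬ y < a → (s y < s a ∨ t y < t a) ∧ (s a < s y ∨ t a < t y)))
    (hA : ∀ a ∈ A, ∀ b ∈ A, ¬ a < b ∧ (s a < s b ∨ t a < t b ∨ (s a = s b ∧ t a = t b))) :
    RealizedOn (insert x (insert y A)) 2 := by
  apply realizedOn_two_of_stages _ s t
  · intro u hu v hv huv
    have := lt_irrefl u
    rw [Finset.mem_insert, Finset.mem_insert] at hu hv
    rcases hu with rfl | rfl | hu <;> rcases hv with rfl | rfl | hv <;> grind
  · intro u hu v hv huv hvu
    have h1 : ¬ u < v := fun h => huv h.le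
    have h2 : ¬ v < u := fun h => hvu h.le
    have h3 : u ≠ v := fun h => huv h.le
    clear huv hvu
    rw [Finset.mem_insert, Finset.mem_insert] at hu hv
    rcases hu with rfl | rfl | hu <;> rcases hv with rfl | rfl | hv <;> grind

/-- An antichain `A` together with two points has dimension at most two. No point lies both above
one element of `A` and below another, so up to exchanging `x` and `y` both points lie on the upper
side of `A`, or both on the lower side, or `x` on the lower and `y` on the upper side; in each case
the stages of two linear extensions are given explicitly. -/
theorem realizedOn_antichain_insert_two {V : Type*} [PartialOrder V] [Fintype V] [DecidableEq V]
    {A : Finset V}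
    (hA : ∀ u ∈ A, ∀ v ∈ A, u ≤ v → u = v) {x y : V} (hxA : x ∉ A) (hyA : y ∉ A) (hxy : x ≠ y) :
    RealizedOn (insert x (insert y A)) 2 := by
  classical
  have hA' : ∀ u ∈ A, ∀ v ∈ A, ¬ u < v := fun u hu v hv h => h.ne (hA u hu v hv h.le)
  have updown : ∀ p : V, (∀ a ∈ A, ¬ p < a) ∨ (∀ a ∈ A, ¬ a < p) := by
    intro p
    by_contra! h
    obtain ⟨⟨a, ha, hpa⟩, b, hb, hbp⟩ := h
    exact hA' b hb a ha (hbp.trans hpa)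
  have key : ∀ x y : V, x ∉ A → y ∉ A → x ≠ y → ¬ y < x →
      ((∀ a ∈ A, ¬ x < a) ∧ (∀ a ∈ A, ¬ y < a) ∨ (∀ a ∈ A, ¬ a < x) ∧ (∀ a ∈ A, ¬ a < y) ∨
        (∀ a ∈ A, ¬ a < x) ∧ (∀ a ∈ A, ¬ y < a)) →
      RealizedOn (insert x (insert y A)) 2 := by
    intro x y hxA hyA hxy hyx h
    have hyx' := hxy.symm
    have tr : ∀ a : V, (a < x → x < y → a < y) ∧ (y < a → x < y → x < a) ∧
        (x < a → a < y → x < y) :=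
      fun a => ⟨lt_trans, fun h h' => h'.trans h, lt_trans⟩
    have hxa : ∀ a ∈ A, a ≠ x := fun a ha h => hxA (h ▸ ha)
    have hya : ∀ a ∈ A, a ≠ y := fun a ha h => hyA (h ▸ ha)
    -- In all six cases the elements of `A` comparable to neither point come first in one order and
    -- last in the other.
    rcases h with ⟨h1, h2⟩ | ⟨h1, h2⟩ | ⟨h1, h2⟩ <;> by_cases hlt : x < y
    · apply realizedOn_antichain_insert_two_aux hxA hyA hxy
        (fun v => if v = x then 2 else if v = y then 4 else
          if v < x then 1 else if v < y then 3 else 0)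
        (fun v => if v = x then 2 else if v = y then 3 else
          if v < x then 1 else if v < y then 0 else 4)
      all_goals grind
    · apply realizedOn_antichain_insert_two_aux hxA hyA hxy
        (fun v => if v = x then 3 else if v = y then 5 else
          if v < x then (if v < y then 2 else 1) else if v < y then 4 else 0)
        (fun v => if v = x then 4 else if v = y then 2 else
          if v < x then (if v < y then 1 else 3) else if v < y then 0 else 5)
      all_goals grind
    · apply realizedOn_antichain_insert_two_aux hxA hyA hxy
        (fun v => if v = x then 0 else if v = y then 2 else
          if y < v then 3 else if x < v then 1 else 4)
        (fun v => if v = x then 1 else if v = y then 2 else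
          if y < v then 3 else if x < v then 4 else 0)
      all_goals grind
    · apply realizedOn_antichain_insert_two_aux hxA hyA hxy
        (fun v => if v = x then 2 else if v = y then 0 else
          if x < v then (if y < v then 3 else 4) else if y < v then 1 else 5)
        (fun v => if v = x then 1 else if v = y then 3 else
          if x < v then (if y < v then 4 else 2) else if y < v then 5 else 0)
      all_goals grind
    · apply realizedOn_antichain_insert_two_aux hxA hyA hxy
        (fun v => if v = x then 2 else if v = y then 4 else
          if v < y then (if x < v then 3 else 1) else if x < v then 5 else 0)
        (fun v => if v = x then 0 else if v = y then 4 else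
          if v < y then (if x < v then 2 else 3) else if x < v then 1 else 5)
      all_goals grind
    · apply realizedOn_antichain_insert_two_aux hxA hyA hxy
        (fun v => if v = x then 3 else if v = y then 2 else
          if v < y then 1 else if x < v then 4 else 0)
        (fun v => if v = x then 0 else if v = y then 3 else
          if v < y then 2 else if x < v then 1 else 4)
      all_goals grind
  by_cases hlt : y < x
  · rw [Finset.insert_comm]
    refine key y x hyA hxA hxy.symm hlt.asymm ?_
    rcases updown x with h1 | h1 <;> rcases updown y with h2 | h2
    · exact Or.inl ⟨h2, h1⟩
    · exact Or.inr (Or.inr ⟨h2, h1⟩)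
    · exact Or.inl ⟨h2, fun a ha h => h2 a ha (hlt.trans h)⟩
    · exact Or.inr (Or.inl ⟨h2, h1⟩)
  · by_cases hlt' : x < y
    · refine key x y hxA hyA hxy hlt ?_
      rcases updown x with h1 | h1 <;> rcases updown y with h2 | h2
      · exact Or.inl ⟨h1, h2⟩
      · exact Or.inl ⟨h1, fun a ha h => h1 a ha (hlt'.trans h)⟩
      · exact Or.inr (Or.inr ⟨h1, h2⟩)
      · exact Or.inr (Or.inl ⟨h1, h2⟩)
    · rcases updown x with h1 | h1 <;> rcases updown y with h2 | h2
      · exact key x y hxA hyA hxy hlt (Or.inl ⟨h1, h2⟩)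
      · rw [Finset.insert_comm]
        exact key y x hyA hxA hxy.symm hlt' (Or.inr (Or.inr ⟨h2, h1⟩))
      · exact key x y hxA hyA hxy hlt (Or.inr (Or.inr ⟨h1, h2⟩))
      · exact key x y hxA hyA hxy hlt (Or.inr (Or.inl ⟨h1, h2⟩))

/-- A poset consisting of an antichain and `n ≥ 2` further points has dimension at most `n`. -/
theorem realizedOn_antichain_union {V : Type*} [PartialOrder V] [Fintype V] [DecidableEq V]
    {A : Finset V} (hA : ∀ u ∈ A, ∀ v ∈ A, u ≤ v → u = v) (j : ℕ) :
    ∀ B : Finset V, Disjoint A B → B.card = j + 2 → RealizedOn (B ∪ A) (j + 2) := by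
  induction j with
  | zero =>
    intro B hAB hB
    obtain ⟨x, y, hxy, rfl⟩ := Finset.card_eq_two.1 hB
    simp only [Finset.disjoint_insert_right, Finset.disjoint_singleton_right] at hAB
    simpa [Finset.insert_union] using realizedOn_antichain_insert_two hA hAB.1 hAB.2 hxy
  | succ j ih =>
    intro B hAB hB
    obtain ⟨b, B', -, rfl, hB'⟩ := Finset.card_eq_succ.1 hB
    rw [Finset.disjoint_insert_right] at hAB
    rw [Finset.insert_union]
    exact (ih B' hAB.2 hB').insert_point b

/-- Hiraguchi's theorem: a poset with `m ≥ 4` elements has dimension at most `⌊m/2⌋`. -/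
theorem hiraguchi {V : Type*} [PartialOrder V] [Fintype V] (hm : 4 ≤ Fintype.card V) :
    RealizedOn (Finset.univ : Finset V) (Fintype.card V / 2) := by
  classical
  obtain ⟨w, ⟨c, hcw, hc⟩, A, -, hAw, hA⟩ := dilworth (Finset.univ : Finset V)
  by_cases hw : w ≤ Fintype.card V / 2
  · exact realizedOn_of_chain_coloring c (fun v => (hcw v (Finset.mem_univ v)).trans_le hw)
      (fun u v => hc u (Finset.mem_univ u) v (Finset.mem_univ v))
  · -- Shrinking the antichain leaves exactly `⌊m/2⌋ ≥ 2` points outside it.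
    obtain ⟨A', hA', hcard⟩ := Finset.exists_subset_card_eq
      (show Fintype.card V - Fintype.card V / 2 ≤ A.card by omega)
    obtain ⟨j, hj⟩ : ∃ j, Fintype.card V / 2 = j + 2 := ⟨Fintype.card V / 2 - 2, by omega⟩
    have h := realizedOn_antichain_union (A := A')
      (fun u hu v hv => hA u (hA' hu) v (hA' hv)) j A'ᶜ disjoint_compl_right
      (by rw [Finset.card_compl]; omega)
    rw [hj]
    rwa [Finset.union_comm, Finset.union_compl] at h

/-! ### From realizers to words -/

/-- A linear extension of a finite poset, as an injective key. -/
theorem exists_linear_key {V : Type*} [PartialOrder V] [Fintype V] :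
    ∃ e : V → ℕ, Function.Injective e ∧ StrictMono e := by
  classical
  have hmono : StrictMono fun v : LinearExtension V =>
      (Finset.univ.filter fun u : V => toLinearExtension u < v).card := by
    intro a b hab
    refine Finset.card_lt_card ?_
    rw [Finset.ssubset_iff_of_subset]
    · exact ⟨(a : V), Finset.mem_filter.2 ⟨Finset.mem_univ (α := V) a, hab⟩,
        fun h => lt_irrefl a (Finset.mem_filter.1 h).2⟩
    · intro u hu
      simp only [Finset.mem_filter, Finset.mem_univ, true_and] at hu ⊢
      exact hu.trans hab
  have hinj : Function.Injective (toLinearExtension : V → LinearExtension V) := fun _ _ h => h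
  exact ⟨_, hmono.injective.comp hinj,
    hmono.comp (toLinearExtension.monotone.strictMono_of_injective hinj)⟩

/-- The permutation of `V` that lists the letters by increasing `g`; its restriction to two letters
with different keys is the pair in increasing order. -/
theorem exists_sorted_list {V : Type*} [Fintype V] [DecidableEq V] (g : V → ℕ) :
    ∃ p : List V, p.Nodup ∧ (∀ v, v ∈ p) ∧ ∀ x y, g x < g y →
      p.filter (fun z => decide (z = x ∨ z = y)) = [x, y] := by
  let p := (Finset.univ : Finset V).toList.insertionSort (fun a b => g a ≤ g b)
  have : Std.Total (fun a b : V => g a ≤ g b) := ⟨fun a b => le_total _ _⟩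
  have : IsTrans V (fun a b : V => g a ≤ g b) := ⟨fun a b c => le_trans⟩
  have hperm : p.Perm (Finset.univ : Finset V).toList := List.perm_insertionSort _ _
  have hnd : p.Nodup := hperm.nodup_iff.2 (Finset.nodup_toList _)
  have hmem : ∀ v, v ∈ p := fun v => hperm.mem_iff.2 (by simp)
  have hsorted : p.Pairwise (fun a b => g a ≤ g b) := List.pairwise_insertionSort _ _
  refine ⟨p, hnd, hmem, fun x y hxy => ?_⟩
  have hne : x ≠ y := fun h => by simp [h] at hxy
  have h1 : (p.filter (fun z => decide (z = x ∨ z = y))).Perm [x, y] := by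
    rw [List.perm_ext_iff_of_nodup (hnd.filter _) (by simp [hne])]
    intro a
    simp [hmem]
  have h2 := hsorted.filter (fun z => decide (z = x ∨ z = y))
  refine List.Perm.eq_of_pairwise ?_ h2 (by simpa using hxy.le : [x, y].Pairwise _) h1
  intro a b ha hb hab hba
  have ha' := h1.mem_iff.1 ha
  simp only [List.mem_cons, List.not_mem_nil, or_false] at ha' hb
  rcases ha' with rfl | rfl <;> rcases hb with rfl | rfl <;> first | rfl | omega

theorem isChain_flatten_of_forall_eq {V : Type*} {x y : V} (hne : x ≠ y) (L : List (List V))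
    (hL : ∀ l ∈ L, l = [x, y]) : L.flatten.IsChain (· ≠ ·) := by
  induction L with
  | nil => simp
  | cons l L ih =>
    have h := ih fun l' hl' => hL l' (by simp [hl'])
    rw [hL l (by simp)]
    cases L with
    | nil => simp [hne]
    | cons l' L =>
      rw [hL l' (by simp)] at h ⊢
      simp only [List.flatten_cons, List.cons_append, List.nil_append] at h ⊢
      simp only [List.isChain_cons_cons] at h ⊢
      exact ⟨hne, hne.symm, h⟩

/-- If blocks `xy` and `yx` are concatenated into an alternating word that starts with `xy`, then
all blocks are `xy`, since `xy` followed by `yx` repeats `y`. -/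
theorem eq_of_isChain_flatten {V : Type*} (L : List (List V)) : ∀ {x y : V},
    (∀ l ∈ L, l = [x, y] ∨ l = [y, x]) → ([x, y] :: L).flatten.IsChain (· ≠ ·) →
    ∀ l ∈ L, l = [x, y] := by
  induction L with
  | nil => simp
  | cons l L ih =>
    intro x y hL hch
    have hl : l = [x, y] := by
      rcases hL l (by simp) with h | h
      · exact h
      · subst h
        simp at hch
    subst hl
    have := ih (x := x) (y := y) (fun l hl => hL l (by simp [hl])) (by
      simp only [List.flatten_cons, List.cons_append, List.nil_append,
        List.isChain_cons_cons] at hch ⊢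
      exact hch.2.2)
    intro l hl
    rcases List.mem_cons.1 hl with h | h
    · exact h
    · exact this l h

/-- A comparability graph on `m ≥ 4` vertices is represented by a concatenation of exactly `⌊m/2⌋`
permutations: the linear extensions obtained from Hiraguchi's theorem. -/
theorem represents_flatten {V : Type*} [Fintype V] [DecidableEq V] (G : SimpleGraph V)
    (hm : 4 ≤ Fintype.card V) (hG : IsComparability G) :
    ∃ ps : List (List V), ps.length = Fintype.card V / 2 ∧
      (∀ p ∈ ps, p.Nodup ∧ ∀ v : V, v ∈ p) ∧ Represents ps.flatten G := by
  classical
  obtain ⟨o, ho⟩ := hG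
  let _ : PartialOrder V :=
    { le := fun x y => x = y ∨ o.dir x y
      le_refl := fun x => Or.inl rfl
      le_trans := by
        rintro x y z (rfl | h) (rfl | h')
        · exact Or.inl rfl
        · exact Or.inr h'
        · exact Or.inr h
        · exact Or.inr (ho _ _ _ h h')
      le_antisymm := by
        rintro x y (rfl | h) (h' | h')
        · rfl
        · rfl
        · exact h'.symm
        · exact absurd ⟨h, h'⟩ (o.not_both x y) }
  have hle : ∀ x y : V, x ≤ y ↔ x = y ∨ o.dir x y := fun x y => Iff.rfl
  obtain ⟨F, hF, hinc⟩ := hiraguchi hm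
  obtain ⟨e, hinj, hemono⟩ := exists_linear_key (V := V)
  -- `g i` is `F i` with ties broken by the linear extension `e`.
  choose g hg using fun i => exists_lex (F i) e
  choose p hnd hmem hp using fun i => exists_sorted_list (g i)
  have hlt : ∀ i x y, x < y → g i x < g i y := by
    intro i x y hxy
    have h1 := hF i hxy.le
    have h2 := hemono hxy
    rw [hg]; omega
  have htot : ∀ i x y, x ≠ y → g i x < g i y ∨ g i y < g i x := by
    intro i x y hxy
    have := hinj.ne hxy
    rw [hg, hg]; omega
  have hk : 0 < Fintype.card V / 2 := by omega
  refine ⟨List.ofFn p, by simp, ?_, ?_, ?_⟩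
  · intro q hq
    obtain ⟨i, rfl⟩ := (List.mem_ofFn' _ _).1 hq
    exact ⟨hnd i, hmem i⟩
  · intro v
    exact List.mem_flatten.2 ⟨p ⟨0, hk⟩, by simp [List.mem_ofFn], hmem _ v⟩
  · have halt : ∀ x y, x < y → Alternate (List.ofFn p).flatten x y := by
      intro x y hxy
      unfold Alternate
      rw [List.filter_flatten]
      refine isChain_flatten_of_forall_eq hxy.ne _ fun l hl => ?_
      obtain ⟨q, hq, rfl⟩ := List.mem_map.1 hl
      obtain ⟨i, rfl⟩ := (List.mem_ofFn' _ _).1 hq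
      exact hp i x y (hlt i x y hxy)
    have hsymm : ∀ x y, Alternate (List.ofFn p).flatten x y →
        Alternate (List.ofFn p).flatten y x := by
      intro x y h
      unfold Alternate at h ⊢
      simpa only [or_comm] using h
    intro x y hxy
    rw [o.adj_iff]
    constructor
    · intro h
      by_contra hno
      have hxy' : ¬ x ≤ y := by rw [hle]; tauto
      have hyx' : ¬ y ≤ x := by rw [hle]; have := hxy.symm; tauto
      obtain ⟨i, hi⟩ := hinc x (Finset.mem_univ x) y (Finset.mem_univ y) hxy' hyx'
      obtain ⟨j, hj⟩ := hinc y (Finset.mem_univ y) x (Finset.mem_univ x) hyx' hxy'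
      have hi' := hp i x y ((hg i x y).2 (Or.inl hi))
      have hj' := hp j y x ((hg j y x).2 (Or.inl hj))
      unfold Alternate at h
      rw [List.filter_flatten] at h
      generalize hL : List.map _ (List.ofFn p) = L at h
      have hmemL : ∀ l, l ∈ L ↔
          ∃ i, (p i).filter (fun z => decide (z = x ∨ z = y)) = l := by
        intro l
        simp [← hL]
      have hall : ∀ l ∈ L, l = [x, y] ∨ l = [y, x] := by
        intro l hl
        obtain ⟨i, rfl⟩ := (hmemL l).1 hl
        rcases htot i x y hxy with h | h
        · exact Or.inl (hp i x y h)
        · right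
          rw [← hp i y x h]
          simp only [or_comm]
      have hiL : [x, y] ∈ L := (hmemL _).2 ⟨i, hi'⟩
      have hjL : [y, x] ∈ L := (hmemL _).2 ⟨j, by rw [← hj']; simp only [or_comm]⟩
      cases L with
      | nil => simp at hiL
      | cons l L =>
        rcases hall l (by simp) with rfl | rfl
        · have := eq_of_isChain_flatten L (fun l hl => hall l (by simp [hl])) h [y, x]
          grind
        · have := eq_of_isChain_flatten L (fun l hl => (hall l (by simp [hl])).symm) h [x, y]
          grind
    · rintro (h | h)
      · exact halt x y (lt_of_le_of_ne (Or.inr h) hxy)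
      · exact hsymm y x (halt y x (lt_of_le_of_ne (Or.inr h) hxy.symm))

/-- Every comparability graph on `m ≥ 4` vertices can be represented by a concatenation of
at most `⌊m/2⌋` permutations of its vertex set; in particular its representation number is
at most `⌊m/2⌋`. -/
theorem comparability_repNum_le_half {V : Type*} [Fintype V] [DecidableEq V]
    (G : SimpleGraph V) (hm : 4 ≤ Fintype.card V) (hG : IsComparability G) :
    (∃ ps : List (List V), ps ≠ [] ∧ ps.length ≤ Fintype.card V / 2 ∧
      (∀ p ∈ ps, p.Nodup ∧ ∀ v : V, v ∈ p) ∧ Represents ps.flatten G) ∧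
    ∃ k ≤ Fintype.card V / 2, KRepresentable G k := by
  obtain ⟨ps, hlen, hps, hrep⟩ := represents_flatten G hm hG
  refine ⟨⟨ps, ?_, hlen.le, hps, hrep⟩, Fintype.card V / 2, le_rfl, ps.flatten, fun v => ?_, hrep⟩
  · rintro rfl
    simp only [List.length_nil] at hlen
    omega
  · rw [List.count_flatten, ← hlen]
    have : ps.map (List.count v) = ps.map (fun _ => 1) :=
      List.map_congr_left fun p hp => List.count_eq_one_of_mem (hps p hp).1 ((hps p hp).2 v)
    rw [this]
    simp
end

section
/- The wheel graph W_5 on 6 vertices (a 5-cycle together with a vertex adjacent to all five cycle vertices) is not word-representable; equivalently, it admits no semi-transitive orientation. -/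
/-- The wheel graph `W_5` on vertices `{0,1,2,3,4,5}`: the 5-cycle `1–2–3–4–5–1`
together with the hub `0` adjacent to each of `1,…,5`. -/
def wheel5 : SimpleGraph (Fin 6) :=
  SimpleGraph.fromRel (fun a b =>
    (a, b) ∈ ([(0, 1), (0, 2), (0, 3), (0, 4), (0, 5),
               (1, 2), (2, 3), (3, 4), (4, 5), (5, 1)] : List (Fin 6 × Fin 6)))

/-- On every prefix of `w` the letter `x` is ahead of `y` by zero or one occurrences, i.e. `x` and
`y` alternate in `w` and `x` comes first. -/
def Leads {V : Type*} [DecidableEq V] (w : List V) (x y : V) : Prop :=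
  ∀ p, p <+: w → p.count y ≤ p.count x ∧ p.count x ≤ p.count y + 1

theorem leads_iff_isChain {V : Type*} [DecidableEq V] (w : List V) :
    ∀ x y : V, x ≠ y →
      (Leads w x y ↔
        (y :: w.filter (fun z => decide (z = x ∨ z = y))).IsChain (· ≠ ·)) := by
  induction w with
  | nil =>
    intro x y _
    simp [Leads]
  | cons a l ih =>
    intro x y hxy
    have hcons : Leads (a :: l) x y ↔ ∀ p, p <+: l →
        (a :: p).count y ≤ (a :: p).count x ∧ (a :: p).count x ≤ (a :: p).count y + 1 := by
      constructor
      · intro h p hp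
        exact h (a :: p) ((List.prefix_cons_inj a).2 hp)
      · intro h p hp
        rcases List.prefix_cons_iff.1 hp with rfl | ⟨q, rfl, hq⟩
        · simp
        · exact h q hq
    rw [hcons]
    by_cases hax : a = x
    · subst hax
      -- Reading the leading letter swaps the roles of the two letters.
      have hsymm : (fun z => decide (z = a ∨ z = y)) = (fun z => decide (z = y ∨ z = a)) := by
        funext z
        simp [or_comm]
      have h := ih y a hxy.symm
      rw [List.filter_cons_of_pos (by simp), List.isChain_cons_cons, hsymm, ← h]
      simp only [Leads, List.count_cons_self, List.count_cons_of_ne hxy]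
      constructor
      · intro h
        refine ⟨hxy.symm, fun p hp => ?_⟩
        have := h p hp
        omega
      · rintro ⟨_, h⟩ p hp
        have := h p hp
        omega
    · by_cases hay : a = y
      · subst hay
        rw [List.filter_cons_of_pos (by simp), List.isChain_cons_cons]
        constructor
        · intro h
          have := h [] List.nil_prefix
          simp [hax] at this
        · rintro ⟨h, _⟩
          exact absurd rfl h
      · rw [List.filter_cons_of_neg (by simp [hax, hay]), ← ih x y hxy]
        simp only [Leads, List.count_cons_of_ne hax, List.count_cons_of_ne hay]

theorem alternate_iff {V : Type*} [DecidableEq V] (w : List V) (x y : V) (hxy : x ≠ y) :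
    Alternate w x y ↔ Leads w x y ∨ Leads w y x := by
  have hsymm : (fun z => decide (z = x ∨ z = y)) = (fun z => decide (z = y ∨ z = x)) := by
    funext z
    simp [or_comm]
  rw [leads_iff_isChain w x y hxy, leads_iff_isChain w y x hxy.symm, ← hsymm]
  change List.IsChain _ _ ↔ _
  cases hf : w.filter (fun z => decide (z = x ∨ z = y)) with
  | nil => simp
  | cons a l =>
    have ha : a = x ∨ a = y := by
      have : a ∈ w.filter (fun z => decide (z = x ∨ z = y)) := by
        rw [hf]
        exact List.mem_cons_self
      simpa using (List.mem_filter.1 this).2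
    simp only [List.isChain_cons_cons]
    constructor
    · intro h
      rcases ha with rfl | rfl
      · exact Or.inl ⟨hxy.symm, h⟩
      · exact Or.inr ⟨hxy, h⟩
    · rintro (h | h) <;> exact h.2

instance : DecidableRel wheel5.Adj := by
  unfold wheel5
  infer_instance

/-- A relation on the rim under which adjacent vertices are comparable cannot avoid being directed
along some induced path, because the rim is an odd cycle. -/
theorem wheel5_no_alternating_rel (R : Fin 6 → Fin 6 → Prop)
    (htot : ∀ x y, x ≠ 0 → y ≠ 0 → wheel5.Adj x y → R x y ∨ R y x)
    (hno : ∀ x y z, x ≠ 0 → y ≠ 0 → z ≠ 0 → wheel5.Adj x y → wheel5.Adj y z → x ≠ z →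
      ¬ wheel5.Adj x z → R x y → R y z → False) : False := by
  have t12 := htot 1 2 (by decide) (by decide) (by decide)
  have t23 := htot 2 3 (by decide) (by decide) (by decide)
  have t34 := htot 3 4 (by decide) (by decide) (by decide)
  have t45 := htot 4 5 (by decide) (by decide) (by decide)
  have t51 := htot 5 1 (by decide) (by decide) (by decide)
  have step : ∀ x y z, x ≠ 0 ∧ y ≠ 0 ∧ z ≠ 0 ∧ wheel5.Adj x y ∧ wheel5.Adj y z ∧ x ≠ z ∧
      ¬ wheel5.Adj x z → ¬ (R x y ∧ R y z) :=
    fun x y z ⟨hx, hy, hz, hxy, hyz, hne, hxz⟩ h => hno x y z hx hy hz hxy hyz hne hxz h.1 h.2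
  have a1 := step 1 2 3 (by decide)
  have a2 := step 2 3 4 (by decide)
  have a3 := step 3 4 5 (by decide)
  have a4 := step 4 5 1 (by decide)
  have a5 := step 5 1 2 (by decide)
  have b1 := step 3 2 1 (by decide)
  have b2 := step 4 3 2 (by decide)
  have b3 := step 5 4 3 (by decide)
  have b4 := step 1 5 4 (by decide)
  have b5 := step 2 1 5 (by decide)
  clear htot hno step
  grind

theorem wheel5_adj_hub : ∀ x : Fin 6, x ≠ 0 → wheel5.Adj x 0 := by
  decide

theorem wheel5_no_word (w : List (Fin 6)) (hw : Represents w wheel5) : False := by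
  classical
  have hedge : ∀ x y, x ≠ y → (wheel5.Adj x y ↔ Leads w x y ∨ Leads w y x) := fun x y hxy =>
    (hw.2 x y hxy).symm.trans (alternate_iff w x y hxy)
  let s : Fin 6 → ℤ := fun x => if Leads w x 0 then 1 else 0
  -- The normalized count: letters starting before the hub are lowered by one.
  let f : Fin 6 → List (Fin 6) → ℤ := fun x p => p.count x - s x
  have hs : ∀ x, s x = 0 ∨ s x = 1 := by
    intro x
    by_cases h : Leads w x 0 <;> simp [s, h]
  have hf : ∀ x, x ≠ 0 → ∀ p, p <+: w →
      (p.count 0 : ℤ) - 1 ≤ f x p ∧ f x p ≤ p.count 0 := by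
    intro x hx p hp
    by_cases h : Leads w x 0
    · have := h p hp
      simp only [f, s, h, if_true]
      omega
    · have := (((hedge x 0 hx).1 (wheel5_adj_hub x hx)).resolve_left h) p hp
      simp only [f, s, h, if_false]
      omega
  refine wheel5_no_alternating_rel (fun x y => ∀ p, p <+: w → f x p ≤ f y p) ?_ ?_
  · have key : ∀ x y, Leads w x y →
        (∀ p, p <+: w → f x p ≤ f y p) ∨ (∀ p, p <+: w → f y p ≤ f x p) := by
      intro x y h
      by_cases hc : s x = 1 ∧ s y = 0
      · left
        intro p hp
        have := h p hp
        simp only [f]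
        omega
      · right
        intro p hp
        have := h p hp
        have := hs x
        have := hs y
        simp only [f]
        omega
    intro x y _ _ hadj
    rcases (hedge x y hadj.ne).1 hadj with h | h
    · exact key x y h
    · exact (key y x h).symm
  · intro x y z hx _ hz _ _ hxz hnadj hxy hyz
    have hle : ∀ p, p <+: w → f x p ≤ f z p := fun p hp => (hxy p hp).trans (hyz p hp)
    apply hnadj
    rw [hedge x z hxz]
    by_cases hc : s x = 1 ∧ s z = 0
    · left
      intro p hp
      have h1 := hle p hp
      have h2 := hf x hx p hp
      have h3 := hf z hz p hp
      simp only [f] at h1 h2 h3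
      omega
    · right
      -- On the empty prefix the inequality reads `- s x ≤ - s z`, so the shifts are equal.
      have h0 := hle [] List.nil_prefix
      simp only [f, List.count_nil] at h0
      intro p hp
      have h1 := hle p hp
      have h2 := hf x hx p hp
      have h3 := hf z hz p hp
      have h4 := hs x
      have h5 := hs z
      simp only [f] at h1 h2 h3
      omega

/-- The case of directed paths with three edges, in terms of the four vertices. -/
theorem GraphOrientation.NoShortcutOfLength.three {V : Type*} {G : SimpleGraph V}
    {o : GraphOrientation G} (h : o.NoShortcutOfLength 3) {a b c d : V}
    (hab : o.dir a b) (hbc : o.dir b c) (hcd : o.dir c d) (had : o.dir a d) :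
    o.dir a c ∧ o.dir b d := by
  have key := h ![a, b, c, d]
    (by
      intro i
      fin_cases i
      · exact hab
      · exact hbc
      · exact hcd) had
  exact ⟨key 0 2 (by decide), key 1 3 (by decide)⟩

theorem wheel5_no_semiTransitive (o : GraphOrientation wheel5) (hac : o.Acyclic)
    (hst : o.SemiTransitive) : False := by
  have tri : ∀ {a b c}, o.dir a b → o.dir b c → o.dir c a → False := fun {a b c} h1 h2 h3 =>
    hac a (((Relation.TransGen.single h1).tail h2).tail h3)
  have hub : ∀ x, x ≠ 0 → o.dir x 0 ∨ o.dir 0 x := fun x hx =>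
    (o.adj_iff x 0).1 (wheel5_adj_hub x hx)
  have nb : ∀ {a b}, o.dir a b → o.dir b a → False := fun {a b} h1 h2 => o.not_both a b ⟨h1, h2⟩
  refine wheel5_no_alternating_rel (fun x y =>
    (o.dir x y ∧ (o.dir x 0 ∧ o.dir y 0 ∨ o.dir 0 x ∧ o.dir 0 y)) ∨
      (o.dir 0 x ∧ o.dir y 0)) ?_ ?_
  · intro x y hx hy hadj
    have h1 := hub x hx
    have h2 := hub y hy
    have h3 := (o.adj_iff x y).1 hadj
    tauto
  · intro x y z _ _ _ hxy hyz _ hxz Rxy Ryz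
    have nxz : ¬ o.dir x z := fun h => hxz ((o.adj_iff x z).2 (Or.inl h))
    have nzx : ¬ o.dir z x := fun h => hxz ((o.adj_iff x z).2 (Or.inr h))
    have s3 := @(hst 3).three
    rcases Rxy with ⟨exy, ⟨x0, y0⟩ | ⟨x0, y0⟩⟩ | ⟨x0, y0⟩ <;>
    rcases Ryz with ⟨eyz, ⟨hy, z0⟩ | ⟨hy, z0⟩⟩ | ⟨hy, z0⟩
    · exact nxz (s3 exy eyz z0 x0).1
    · exact nb y0 hy
    · exact nb y0 hy
    · exact nb y0 hy
    · exact nxz (s3 x0 exy eyz z0).2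
    -- The edge `y z` must point from the in-neighbour `z` to the out-neighbour `y`.
    · have ezy : o.dir z y := ((o.adj_iff y z).1 hyz).resolve_left fun h => tri hy h z0
      exact nzx (s3 z0 x0 exy ezy).1
    · have eyx : o.dir y x := ((o.adj_iff x y).1 hxy).resolve_left fun h => tri x0 h y0
      exact nzx (s3 eyz z0 x0 eyx).2
    · exact nb y0 hy
    · exact nb y0 hy

/-- The wheel `W_5` is not word-representable; equivalently, it admits no semi-transitive
orientation. -/
theorem wheel5_not_wordRepresentable :
    ¬ WordRepresentable wheel5 ∧
    ¬ ∃ o : GraphOrientation wheel5, o.Acyclic ∧ o.SemiTransitive := by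
  exact ⟨fun ⟨w, hw⟩ => wheel5_no_word w hw,
    fun ⟨o, hac, hst⟩ => wheel5_no_semiTransitive o hac hst⟩
end
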